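/- arXiv:1208.5361 — 2 statements merged into one kernel-verified Lean document; each statement's English description precedes it below -/
import Mathlib

section
/- Let n ≥ 1 and let f : ℝⁿ → ℝ be a smooth convex function whose Hessian D²f(x) is positive definite at every x ∈ ℝⁿ. Then there is NO nonnegative function η : (0,∞) → ℝ such that S*_x(k) / W(x) = η(k) for all x ∈ ℝⁿ and all k > 0, where S*_x(k) = ∫_{{y : f(y) < f(x) + ⟨∇f(x), y − x⟩ + k}} √(1 + ‖∇f(y)‖²) dy and W(x) = √(1 + ‖∇f(x)‖²). -/
open MeasureTheory Filter
open scoped RealInnerProductSpace Topology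

/-- The Hessian matrix of `f : ℝⁿ → ℝ` at a point `x`, with entries the second
partial derivatives of `f`. -/
noncomputable def hessianMatrix {n : ℕ} (f : EuclideanSpace ℝ (Fin n) → ℝ)
    (x : EuclideanSpace ℝ (Fin n)) : Matrix (Fin n) (Fin n) ℝ :=
  Matrix.of fun i j =>
    iteratedFDeriv ℝ 2 f x ![EuclideanSpace.single i 1, EuclideanSpace.single j 1]

/-!
Write `D(x, y) = f(y) - f(x) - ⟪∇f(x), y - x⟫`, so that `Φ_x(k)` is the sublevel set
`{D(x, ·) < k}`, and let `σ` be the surface measure of the graph, projected to the base. If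
`σ(Φ_x(k)) = W(x) η(k)`, then the law of `D(x, ·)` under `σ` is `W(x)` times a measure on the line
that does not depend on `x`, and so is its Laplace transform `∫ exp (t D(x, ·)) dσ`, `t < 0`.
When `∇f(z)` is the midpoint of `∇f(a)` and `∇f(b)`, the functions `D(z, ·)` and
`(D(a, ·) + D(b, ·)) / 2` differ by a constant, so the Cauchy–Schwarz inequality, in the limit
`t → 0`, gives `W(z)² ≤ W(a) W(b)`. Since `W` is comparable to `‖∇f‖`, this forces `∇f` to be
bounded. But then, at points where the slope in a fixed direction is almost maximal, `Φ_x(1)`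
contains arbitrarily long cylinders of a fixed radius, whereas `|Φ_x(1)| ≤ σ(Φ_x(1)) = W(x) η(1)`
is bounded.

The Laplace transforms converge because the area density grows at most like the radial
derivative of `D(x, ·)`, and `∫ exp (t D(x, x + s (y - x))) dy` is a smooth function of the
dilation factor `s`.
-/

section Measure

open ProbabilityTheory

lemma measure_ext_of_Iio {α : Type*} [TopologicalSpace α] [MeasurableSpace α]
    [SecondCountableTopology α] [LinearOrder α] [OrderTopology α] [BorelSpace α] [NoMaxOrder α]
    {μ ν : Measure α} (hfin : ∀ a, μ (Set.Iio a) ≠ ⊤) (h : ∀ a, μ (Set.Iio a) = ν (Set.Iio a)) :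
    μ = ν := by
  obtain ⟨T, hT, hcover⟩ :=
    TopologicalSpace.isOpen_iUnion_countable (fun a : α => Set.Iio a) fun _ => isOpen_Iio
  refine Measure.ext_of_generateFrom_of_cover_subset (T := Set.Iio '' T)
    (BorelSpace.measurable_eq.trans (borel_eq_generateFrom_Iio α)) isPiSystem_Iio
    (Set.image_subset_range _ _) (hT.image _) ?_ ?_ ?_
  · rw [Set.sUnion_image, hcover, Set.iUnion_Iio]
  · rintro _ ⟨a, -, rfl⟩
    exact hfin a
  · rintro _ ⟨a, rfl⟩
    exact h a

lemma sq_mgf_half_add_le {Ω : Type*} [MeasurableSpace Ω] {μ : Measure Ω} {X Y : Ω → ℝ} {t : ℝ}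
    (hX : Integrable (fun ω => Real.exp (t * X ω)) μ)
    (hY : Integrable (fun ω => Real.exp (t * Y ω)) μ) :
    mgf (fun ω => (X ω + Y ω) / 2) μ t ^ 2 ≤ mgf X μ t * mgf Y μ t := by
  have hsqrt (s : ℝ) : Real.exp (s / 2) = √(Real.exp s) := Real.exp_half s
  have hmem {Z : Ω → ℝ} (hZ : Integrable (fun ω => Real.exp (t * Z ω)) μ) :
      MemLp (fun ω => √(Real.exp (t * Z ω))) (ENNReal.ofReal 2) μ := by
    rw [ENNReal.ofReal_ofNat, memLp_two_iff_integrable_sq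
      (Real.continuous_sqrt.comp_aestronglyMeasurable hZ.aestronglyMeasurable)]
    simpa only [Real.sq_sqrt (Real.exp_pos _).le] using hZ
  have hholder := integral_mul_le_Lp_mul_Lq_of_nonneg Real.HolderConjugate.two_two
    (Eventually.of_forall fun _ => Real.sqrt_nonneg _)
    (Eventually.of_forall fun _ => Real.sqrt_nonneg _) (hmem hX) (hmem hY)
  simp only [Real.rpow_two, Real.sq_sqrt (Real.exp_pos _).le, ← Real.sqrt_eq_rpow] at hholder
  calc mgf (fun ω => (X ω + Y ω) / 2) μ t ^ 2
      = (∫ ω, √(Real.exp (t * X ω)) * √(Real.exp (t * Y ω)) ∂μ) ^ 2 := by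
        simp only [mgf, ← hsqrt, ← Real.exp_add]
        ring_nf
    _ ≤ (√(mgf X μ t) * √(mgf Y μ t)) ^ 2 :=
        pow_le_pow_left₀ (integral_nonneg fun _ => by positivity) hholder 2
    _ = mgf X μ t * mgf Y μ t := by
        rw [mul_pow, Real.sq_sqrt mgf_nonneg, Real.sq_sqrt mgf_nonneg]

-- Fatou's lemma applied to the difference quotients, whose integrals converge.
lemma integrable_of_hasDerivAt_of_le {α : Type*} [MeasurableSpace α] {μ : Measure α}
    {F : ℝ → α → ℝ} {F' : α → ℝ} {s₀ : ℝ} (hint : ∀ s ≥ s₀, Integrable (F s) μ)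
    (hle : ∀ s ≥ s₀, ∀ a, F s₀ a ≤ F s a) (hderiv : ∀ a, HasDerivAt (F · a) (F' a) s₀)
    (hdiff : DifferentiableAt ℝ (fun s => ∫ a, F s a ∂μ) s₀) : Integrable F' μ := by
  obtain ⟨u, -, hu, hlim⟩ := exists_seq_strictAnti_tendsto_nhdsWithin (0 : ℝ)
  set q : ℕ → α → ℝ := fun j a => (u j)⁻¹ • (F (s₀ + u j) a - F s₀ a) with hq
  have hle_add (j : ℕ) : s₀ ≤ s₀ + u j := le_add_of_nonneg_right (hu j).le
  have hq_nonneg (j : ℕ) (a : α) : 0 ≤ q j a :=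
    smul_nonneg (inv_nonneg.2 (hu j).le) (sub_nonneg.2 (hle _ (hle_add j) a))
  have hq_int (j : ℕ) : Integrable (q j) μ :=
    ((hint _ (hle_add j)).sub (hint s₀ le_rfl)).smul (u j)⁻¹
  have hq_lim (a : α) : Tendsto (q · a) atTop (𝓝 (F' a)) :=
    (hderiv a).tendsto_slope_zero_right.comp hlim
  have hintegral_lim : Tendsto (fun j => ∫⁻ a, ENNReal.ofReal (q j a) ∂μ) atTop
      (𝓝 (ENNReal.ofReal (deriv (fun s => ∫ a, F s a ∂μ) s₀))) := by
    convert ENNReal.tendsto_ofReal (hdiff.hasDerivAt.tendsto_slope_zero_right.comp hlim) using 2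
      with j
    rw [← ofReal_integral_eq_lintegral_ofReal (hq_int j) (Eventually.of_forall (hq_nonneg j)),
      Function.comp_apply, hq, integral_smul,
      integral_sub (hint _ (hle_add j)) (hint s₀ le_rfl)]
  refine ⟨aestronglyMeasurable_of_tendsto_ae atTop (fun j => (hq_int j).aestronglyMeasurable)
    (Eventually.of_forall hq_lim), ?_⟩
  rw [hasFiniteIntegral_iff_ofReal
    (Eventually.of_forall fun a => ge_of_tendsto' (hq_lim a) (hq_nonneg · a))]
  calc ∫⁻ a, ENNReal.ofReal (F' a) ∂μ
      = ∫⁻ a, liminf (fun j => ENNReal.ofReal (q j a)) atTop ∂μ := by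
        simp only [fun a => (ENNReal.tendsto_ofReal (hq_lim a)).liminf_eq]
    _ ≤ liminf (fun j => ∫⁻ a, ENNReal.ofReal (q j a) ∂μ) atTop :=
        lintegral_liminf_le' fun j => (hq_int j).aemeasurable.ennreal_ofReal
    _ < ⊤ := hintegral_lim.liminf_eq ▸ ENNReal.ofReal_lt_top

lemma card_mul_measure_ball_le {E ι : Type*} [NormedAddCommGroup E] [MeasurableSpace E]
    [BorelSpace E] {μ : Measure E} [μ.IsAddHaarMeasure] {t : Finset ι} {p : ι → E} {r : ℝ}
    {s : Set E} (hsep : (t : Set ι).Pairwise fun i j => 2 * r ≤ dist (p i) (p j))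
    (hs : ∀ i ∈ t, Metric.ball (p i) r ⊆ s) : t.card * μ (Metric.ball 0 r) ≤ μ s :=
  calc t.card * μ (Metric.ball 0 r)
      = ∑ i ∈ t, μ (Metric.ball (p i) r) := by
        simp [Measure.addHaar_ball_center]
    _ = μ (⋃ i ∈ t, Metric.ball (p i) r) :=
        (measure_biUnion_finset (fun i hi j hj hij => Metric.ball_disjoint_ball
          (by linarith [hsep hi hj hij])) fun _ _ => measurableSet_ball).symm
    _ ≤ μ s := measure_mono (Set.iUnion₂_subset hs)

variable {E : Type*} [NormedAddCommGroup E] [NormedSpace ℝ E] [MeasurableSpace E] [BorelSpace E]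
  [FiniteDimensional ℝ E] {μ : Measure E} [μ.IsAddHaarMeasure]

-- The integral of `G` over the dilate of ratio `s` about `x` is `s⁻ⁿ` times that of `G`.
lemma integrable_fderiv_apply_sub {G : E → ℝ} (hG : Differentiable ℝ G) (hint : Integrable G μ)
    (x : E) (hanti : ∀ y, ∀ s ≥ (1 : ℝ), G (x + s • (y - x)) ≤ G y) :
    Integrable (fun y => fderiv ℝ G y (y - x)) μ := by
  have hF_int (s : ℝ) (hs : 1 ≤ s) : Integrable (fun y => G (x + s • (y - x))) μ :=
    ((hint.comp_add_left x).comp_smul (by positivity)).comp_sub_right x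
  have hderiv (y : E) : HasDerivAt (fun s : ℝ => G (x + s • (y - x))) (fderiv ℝ G y (y - x)) 1 := by
    have hline : HasDerivAt (fun s : ℝ => x + s • (y - x)) (y - x) 1 := by
      simpa using ((hasDerivAt_id (1 : ℝ)).smul_const (y - x)).const_add x
    refine HasFDerivAt.comp_hasDerivAt 1 ?_ hline
    simpa using (hG y).hasFDerivAt
  have hscale (s : ℝ) (hs : 0 ≤ s) :
      ∫ y, G (x + s • (y - x)) ∂μ = (s ^ Module.finrank ℝ E)⁻¹ * ∫ y, G y ∂μ := by
    rw [integral_sub_right_eq_self (fun y => G (x + s • y)) x,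
      Measure.integral_comp_smul_of_nonneg μ (fun y => G (x + y)) s (hR := hs),
      integral_add_left_eq_self, smul_eq_mul]
  have hdiff : DifferentiableAt ℝ (fun s : ℝ => ∫ y, G (x + s • (y - x)) ∂μ) 1 := by
    refine DifferentiableAt.congr_of_eventuallyEq
      (f := fun s => (s ^ Module.finrank ℝ E)⁻¹ * ∫ y, G y ∂μ) ?_ ?_
    · fun_prop (disch := simp)
    · filter_upwards [eventually_ge_nhds one_pos] with s hs using hscale s hs
  have hneg : Integrable (fun y => -fderiv ℝ G y (y - x)) μ := by
    refine integrable_of_hasDerivAt_of_le (F := fun s y => -G (x + s • (y - x))) (s₀ := 1)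
      (fun s hs => (hF_int s hs).neg) (fun s hs y => ?_) (fun y => (hderiv y).neg) ?_
    · simpa using hanti y s hs
    · simpa only [integral_neg] using hdiff.fun_neg
  simpa only [Pi.neg_def, neg_neg] using hneg.neg

lemma integrable_exp_neg_mul_norm {c : ℝ} (hc : 0 < c) :
    Integrable (fun w : E => Real.exp (-c * ‖w‖)) μ := by
  cases subsingleton_or_nontrivial E
  · exact (continuous_of_discreteTopology.integrable_of_hasCompactSupport
      (HasCompactSupport.of_compactSpace _))
  · rw [integrable_fun_norm_addHaar μ (f := fun r => Real.exp (-c * r))]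
    simpa using integrableOn_rpow_mul_exp_neg_mul_rpow (s := (Module.finrank ℝ E - 1 : ℕ))
      (neg_one_lt_zero.trans_le (Nat.cast_nonneg _)) one_pos hc

end Measure

lemma exists_pos_mul_norm_sub_le {E : Type*} [NormedAddCommGroup E] [NormedSpace ℝ E]
    [ProperSpace E] {h : E → ℝ} (hconv : ConvexOn ℝ Set.univ h) (hcont : Continuous h) {x : E}
    (hx : h x = 0) (hpos : ∀ y, y ≠ x → 0 < h y) :
    ∃ m, 0 < m ∧ ∀ y, m * (‖y - x‖ - 1) ≤ h y := by
  obtain ⟨m, hm, hsphere⟩ := (isCompact_sphere x 1).exists_forall_le' hcont.continuousOn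
    (a := 0) fun y hy => hpos y (ne_of_mem_of_not_mem hy (by simp))
  refine ⟨m, hm, fun y => ?_⟩
  rcases lt_or_ge ‖y - x‖ 1 with hy | hy
  · have hnonneg : 0 ≤ h y := by
      rcases eq_or_ne y x with rfl | hne
      exacts [hx.ge, (hpos y hne).le]
    nlinarith
  · set r := ‖y - x‖ with hr
    have hr0 : 0 < r := one_pos.trans_le hy
    have hle : h ((1 - r⁻¹) • x + r⁻¹ • y) ≤ (1 - r⁻¹) * h x + r⁻¹ * h y :=
      hconv.2 (Set.mem_univ x) (Set.mem_univ y) (sub_nonneg.2 (inv_le_one_of_one_le₀ hy))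
        (inv_nonneg.2 hr0.le) (sub_add_cancel _ _)
    have hmem : (1 - r⁻¹) • x + r⁻¹ • y ∈ Metric.sphere x 1 := by
      rw [mem_sphere_iff_norm, show (1 - r⁻¹) • x + r⁻¹ • y - x = r⁻¹ • (y - x) by module,
        norm_smul, norm_inv, hr, norm_norm, inv_mul_cancel₀ hr0.ne']
    have hmr : m ≤ r⁻¹ * h y := by
      simpa [hx] using (hsphere _ hmem).trans hle
    rw [le_inv_mul_iff₀ hr0] at hmr
    linarith

/-- The Bregman divergence of `f`: the height over `y` of the graph of `f` above its tangent
hyperplane at `x`. -/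
noncomputable def bregman {E : Type*} [NormedAddCommGroup E] [InnerProductSpace ℝ E]
    [CompleteSpace E] (f : E → ℝ) (x y : E) : ℝ :=
  f y - f x - ⟪gradient f x, y - x⟫

/-- The sublevel sets of the Bregman divergence; the paper writes `Φ_x(k)` for
`bregmanBall f x k`. -/
def bregmanBall {E : Type*} [NormedAddCommGroup E] [InnerProductSpace ℝ E]
    [CompleteSpace E] (f : E → ℝ) (x : E) (k : ℝ) : Set E :=
  {y | bregman f x y < k}

section Bregman

variable {E : Type*} [NormedAddCommGroup E] [InnerProductSpace ℝ E] [CompleteSpace E]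
  {f : E → ℝ}

@[simp]
lemma bregman_self (x : E) : bregman f x x = 0 := by simp [bregman]

lemma bregman_add_bregman_swap (x y : E) :
    bregman f x y + bregman f y x = ⟪gradient f y - gradient f x, y - x⟫ := by
  have hswap : ⟪gradient f y, x - y⟫ = -⟪gradient f y, y - x⟫ := by
    rw [← inner_neg_right, neg_sub]
  simp only [bregman, inner_sub_left, hswap]
  ring

lemma bregman_three_point (x y z : E) :
    bregman f x z = bregman f x y + ⟪gradient f y - gradient f x, z - y⟫ + bregman f y z := by
  have hsplit : z - x = (y - x) + (z - y) := by abel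
  simp only [bregman, inner_sub_left, hsplit, inner_add_right]
  ring

lemma bregman_eq_of_gradient_eq_midpoint {a b z : E}
    (hz : gradient f z = midpoint ℝ (gradient f a) (gradient f b)) (y : E) :
    bregman f z y =
      (bregman f a y + bregman f b y) / 2 +
        (bregman f z 0 - (bregman f a 0 + bregman f b 0) / 2) := by
  simp only [bregman, hz, midpoint_eq_smul_add, inner_smul_left, inner_add_left, inner_sub_right,
    inner_zero_right, RCLike.conj_to_real, invOf_eq_inv]
  ring

lemma continuous_gradient (hf : ContDiff ℝ 1 f) : Continuous (gradient f) :=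
  (InnerProductSpace.toDual ℝ E).symm.continuous.comp (hf.continuous_fderiv one_ne_zero)

lemma continuous_bregman (hf : Continuous f) (x : E) : Continuous (bregman f x) := by
  unfold bregman
  fun_prop

lemma hasFDerivAt_bregman {y : E} (hf : DifferentiableAt ℝ f y) (x : E) :
    HasFDerivAt (bregman f x) (innerSL ℝ (gradient f y - gradient f x)) y := by
  have hlin : HasFDerivAt (fun z => ⟪gradient f x, z - x⟫) (innerSL ℝ (gradient f x)) y :=
    (innerSL ℝ (gradient f x)).hasFDerivAt.comp y ((hasFDerivAt_id y).sub_const x)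
  rw [map_sub]
  exact (hf.hasGradientAt.hasFDerivAt.sub_const (f x)).sub hlin

lemma convexOn_bregman (hconv : ConvexOn ℝ Set.univ f) (x : E) :
    ConvexOn ℝ Set.univ (bregman f x) := by
  have haffine : ConcaveOn ℝ Set.univ fun y => f x + ⟪gradient f x, y - x⟫ := by
    refine ⟨convex_univ, fun y _ z _ a b _ _ hab => le_of_eq ?_⟩
    simp only [inner_sub_right, inner_add_right, inner_smul_right, smul_eq_mul]
    linear_combination (f x - ⟪gradient f x, x⟫) * hab
  exact (hconv.sub haffine).congr fun y _ => (sub_sub _ _ _).symm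

lemma bregman_nonneg {x : E} (hconv : ConvexOn ℝ Set.univ f) (hf : DifferentiableAt ℝ f x)
    (y : E) : 0 ≤ bregman f x y := by
  have hgrad : HasFDerivAt f (innerSL ℝ (gradient f x)) (AffineMap.lineMap x y (0 : ℝ)) := by
    rw [AffineMap.lineMap_apply_zero]
    exact hf.hasGradientAt.hasFDerivAt
  have hline := hgrad.comp_hasDerivAt (0 : ℝ) AffineMap.hasDerivAt_lineMap
  have hslope := (hconv.comp_affineMap (AffineMap.lineMap (k := ℝ) x y)).le_slope_of_hasDerivAt
    (Set.mem_univ 0) (Set.mem_univ 1) one_pos hline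
  simpa [slope_def_field, bregman] using hslope

lemma bregman_pos {x y : E} (hconv : StrictConvexOn ℝ Set.univ f) (hf : DifferentiableAt ℝ f x)
    (hxy : y ≠ x) : 0 < bregman f x y := by
  have hmid : f (midpoint ℝ x y) < (f x + f y) / 2 := by
    have := hconv.2 (Set.mem_univ x) (Set.mem_univ y) hxy.symm one_half_pos one_half_pos
      (add_halves 1)
    rw [midpoint_eq_smul_add, invOf_eq_inv, smul_add, ← one_div]
    simp only [smul_eq_mul] at this
    linarith
  have hnonneg := bregman_nonneg hconv.convexOn hf (midpoint ℝ x y)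
  simp only [bregman, midpoint_sub_left, inner_smul_right, invOf_eq_inv] at hnonneg ⊢
  linarith

lemma bregman_le_inner {y : E} (hconv : ConvexOn ℝ Set.univ f) (hf : DifferentiableAt ℝ f y)
    (x : E) : bregman f x y ≤ ⟪gradient f y - gradient f x, y - x⟫ := by
  linarith [bregman_add_bregman_swap (f := f) x y, bregman_nonneg hconv hf x]

lemma inner_gradient_sub_nonneg (hconv : ConvexOn ℝ Set.univ f) (hf : Differentiable ℝ f)
    (x y : E) : 0 ≤ ⟪gradient f y - gradient f x, y - x⟫ :=
  (bregman_nonneg hconv (hf x) y).trans (bregman_le_inner hconv (hf y) x)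

lemma bregman_le_bregman_dilation (hconv : ConvexOn ℝ Set.univ f) (hf : Differentiable ℝ f)
    (x y : E) {s : ℝ} (hs : 1 ≤ s) : bregman f x y ≤ bregman f x (x + s • (y - x)) := by
  have hthree := bregman_three_point (f := f) x y (x + s • (y - x))
  rw [show x + s • (y - x) - y = (s - 1) • (y - x) by module, inner_smul_right] at hthree
  have := mul_nonneg (sub_nonneg.2 hs) (inner_gradient_sub_nonneg hconv hf x y)
  linarith [bregman_nonneg hconv (hf y) (x + s • (y - x))]

lemma bregman_le_add_mul_norm_sub (hconv : ConvexOn ℝ Set.univ f) (hf : Differentiable ℝ f)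
    {M : ℝ} (hM : ∀ x, ‖gradient f x‖ ≤ M) (x y z : E) :
    bregman f x z ≤ bregman f x y + 2 * M * ‖z - y‖ := by
  have hslope : ⟪gradient f z - gradient f x, z - y⟫ ≤ 2 * M * ‖z - y‖ := by
    refine (real_inner_le_norm _ _).trans (mul_le_mul_of_nonneg_right ?_ (norm_nonneg _))
    linarith [norm_sub_le (gradient f z) (gradient f x), hM x, hM z]
  have hback := bregman_nonneg hconv (hf z) y
  have hthree := bregman_three_point (f := f) x z y
  rw [← neg_sub z y, inner_neg_right] at hthree
  linarith

lemma bregmanBall_eq_empty (hconv : ConvexOn ℝ Set.univ f) (hf : Differentiable ℝ f) (x : E)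
    {k : ℝ} (hk : k ≤ 0) : bregmanBall f x k = ∅ :=
  Set.eq_empty_of_forall_notMem fun y hy => hy.not_ge (hk.trans (bregman_nonneg hconv (hf x) y))

variable [ProperSpace E]

lemma exists_pos_mul_norm_sub_le_bregman (hconv : StrictConvexOn ℝ Set.univ f)
    (hf : Differentiable ℝ f) (x : E) :
    ∃ m, 0 < m ∧ ∀ y, m * (‖y - x‖ - 1) ≤ bregman f x y :=
  exists_pos_mul_norm_sub_le (convexOn_bregman hconv.convexOn x)
    (continuous_bregman hf.continuous x) (bregman_self x) fun _ => bregman_pos hconv (hf x)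

lemma tendsto_bregman_cocompact (hconv : StrictConvexOn ℝ Set.univ f) (hf : Differentiable ℝ f)
    (x : E) : Tendsto (bregman f x) (cocompact E) atTop := by
  obtain ⟨m, hm, hle⟩ := exists_pos_mul_norm_sub_le_bregman hconv hf x
  refine tendsto_atTop_mono hle (Tendsto.const_mul_atTop hm (tendsto_atTop_add_const_right _ _ ?_))
  simpa only [dist_eq_norm] using tendsto_dist_right_cocompact_atTop x

lemma isBounded_bregmanBall (hconv : StrictConvexOn ℝ Set.univ f) (hf : Differentiable ℝ f)
    (x : E) (k : ℝ) : Bornology.IsBounded (bregmanBall f x k) := by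
  obtain ⟨m, hm, hle⟩ := exists_pos_mul_norm_sub_le_bregman hconv hf x
  refine (Metric.isBounded_closedBall (x := x) (r := k / m + 1)).subset fun y hy => ?_
  rw [mem_closedBall_iff_norm, ← sub_le_iff_le_add, le_div_iff₀' hm]
  exact (hle y).trans hy.le

-- A minimiser of `a D(p, ·) + b D(q, ·)` has gradient `a ∇f(p) + b ∇f(q)`.
lemma convex_range_gradient (hconv : StrictConvexOn ℝ Set.univ f) (hf : Differentiable ℝ f) :
    Convex ℝ (Set.range (gradient f)) := by
  rw [convex_iff_forall_pos]
  rintro _ ⟨p, rfl⟩ _ ⟨q, rfl⟩ a b ha hb hab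
  have hcont := continuous_bregman hf.continuous
  obtain ⟨z, hz⟩ := (((hcont p).const_mul a).add ((hcont q).const_mul b)).exists_forall_le <|
    ((tendsto_bregman_cocompact hconv hf p).const_mul_atTop ha).atTop_add_atTop
      ((tendsto_bregman_cocompact hconv hf q).const_mul_atTop hb)
  have hcrit := IsLocalMin.hasFDerivAt_eq_zero (Eventually.of_forall hz)
    (((hasFDerivAt_bregman (hf z) p).const_mul a).add
      ((hasFDerivAt_bregman (hf z) q).const_mul b))
  rw [← map_smul, ← map_smul, ← map_add, ← map_zero (innerSL ℝ), innerSL_inj] at hcrit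
  exact ⟨z, by linear_combination (norm := module) hcrit - hab • gradient f z⟩

lemma exists_norm_gradient_sub_le (hconv : ConvexOn ℝ Set.univ f) (hf : Differentiable ℝ f)
    (x : E) :
    ∃ C, ∀ y, ‖gradient f y - gradient f x‖ ≤ C + ⟪gradient f y - gradient f x, y - x⟫ := by
  obtain ⟨C, hC⟩ := (isCompact_closedBall x 1).exists_bound_of_continuousOn
    (continuous_bregman hf.continuous x).continuousOn
  refine ⟨C, fun y => ?_⟩
  set u := gradient f y - gradient f x
  set v : E := x + ‖u‖⁻¹ • u with hv
  have hvC : bregman f x v ≤ C := by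
    refine (le_abs_self _).trans (hC v ?_)
    rw [mem_closedBall_iff_norm, hv, add_sub_cancel_left, norm_smul, norm_inv, norm_norm]
    exact inv_mul_le_one
  have huv : ⟪u, v - y⟫ = ‖u‖ - ⟪u, y - x⟫ := by
    rw [show v - y = ‖u‖⁻¹ • u - (y - x) by rw [hv]; abel, inner_sub_right, inner_smul_right,
      real_inner_self_eq_norm_mul_norm, ← mul_assoc, inv_mul_mul_self]
  linarith [bregman_three_point (f := f) x y v, bregman_nonneg hconv (hf x) y,
    bregman_nonneg hconv (hf y) v]

end Bregman

/-- The area density of the graph of `f` with respect to Lebesgue measure on the base; the paper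
writes `W`. -/
noncomputable def areaDensity {E : Type*} [NormedAddCommGroup E] [InnerProductSpace ℝ E]
    [CompleteSpace E] (f : E → ℝ) (x : E) : ℝ :=
  √(1 + ‖gradient f x‖ ^ 2)

section AreaDensity

variable {E : Type*} [NormedAddCommGroup E] [InnerProductSpace ℝ E] [CompleteSpace E]
  {f : E → ℝ}

lemma areaDensity_pos (x : E) : 0 < areaDensity f x := by
  unfold areaDensity
  positivity

lemma one_le_areaDensity (x : E) : 1 ≤ areaDensity f x :=
  Real.one_le_sqrt.2 (le_add_of_nonneg_right (sq_nonneg _))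

lemma norm_gradient_le_areaDensity (x : E) : ‖gradient f x‖ ≤ areaDensity f x :=
  Real.le_sqrt_of_sq_le (le_add_of_nonneg_left zero_le_one)

lemma areaDensity_le_one_add_norm_gradient (x : E) : areaDensity f x ≤ 1 + ‖gradient f x‖ :=
  Real.sqrt_le_iff.2 ⟨by positivity, by nlinarith [norm_nonneg (gradient f x)]⟩

lemma areaDensity_le_of_gradient_eq_midpoint {a b z : E}
    (hz : gradient f z = midpoint ℝ (gradient f a) (gradient f b)) :
    areaDensity f b ≤ 1 + 2 * areaDensity f z + areaDensity f a := by
  have hb : gradient f b = (2 : ℝ) • gradient f z - gradient f a := by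
    rw [hz, midpoint_eq_smul_add, smul_invOf_smul, add_sub_cancel_left]
  have hnorm : ‖gradient f b‖ ≤ 2 * ‖gradient f z‖ + ‖gradient f a‖ := by
    simpa [hb, norm_smul] using norm_sub_le ((2 : ℝ) • gradient f z) (gradient f a)
  linarith [areaDensity_le_one_add_norm_gradient (f := f) b,
    norm_gradient_le_areaDensity (f := f) z, norm_gradient_le_areaDensity (f := f) a]

lemma continuous_areaDensity (hf : ContDiff ℝ 1 f) : Continuous (areaDensity f) := by
  have := continuous_gradient hf
  unfold areaDensity
  fun_prop

end AreaDensity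

/-- The surface measure of the graph of `f`, transported to `E` by the projection; the paper
writes `S*_x(k)` for its value on `bregmanBall f x k`. -/
noncomputable def graphMeasure {E : Type*} [NormedAddCommGroup E] [InnerProductSpace ℝ E]
    [FiniteDimensional ℝ E] [MeasurableSpace E] [BorelSpace E] (f : E → ℝ) : Measure E :=
  volume.withDensity fun y => ENNReal.ofReal (areaDensity f y)

section GraphMeasure

open ProbabilityTheory

variable {E : Type*} [NormedAddCommGroup E] [InnerProductSpace ℝ E] [FiniteDimensional ℝ E]
  [MeasurableSpace E] [BorelSpace E] {f : E → ℝ}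

lemma volume_le_graphMeasure (f : E → ℝ) : volume ≤ graphMeasure f := by
  nth_rw 1 [← withDensity_one (μ := volume)]
  exact withDensity_mono (Eventually.of_forall fun y =>
    ENNReal.one_le_ofReal.2 (one_le_areaDensity y))

lemma graphMeasure_ne_zero (f : E → ℝ) : graphMeasure f ≠ 0 := fun h =>
  NeZero.ne (volume : Measure E) (Measure.nonpos_iff_eq_zero'.1 (h ▸ volume_le_graphMeasure f))

lemma measureReal_graphMeasure (hf : ContDiff ℝ 1 f) (s : Set E) :
    (graphMeasure f).real s = ∫ y in s, areaDensity f y := by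
  rw [integral_eq_lintegral_of_nonneg_ae (Eventually.of_forall fun y => (areaDensity_pos y).le)
    (continuous_areaDensity hf).aestronglyMeasurable, measureReal_def, graphMeasure,
    withDensity_apply']

lemma integrable_graphMeasure_iff (hf : ContDiff ℝ 1 f) {g : E → ℝ} :
    Integrable g (graphMeasure f) ↔ Integrable (fun y => areaDensity f y * g y) := by
  rw [graphMeasure, integrable_withDensity_iff_integrable_smul'
    (continuous_areaDensity hf).measurable.ennreal_ofReal
    (Eventually.of_forall fun _ => ENNReal.ofReal_lt_top)]
  simp only [ENNReal.toReal_ofReal (areaDensity_pos _).le, smul_eq_mul]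

lemma graphMeasure_bregmanBall_ne_top (hconv : StrictConvexOn ℝ Set.univ f)
    (hf : ContDiff ℝ 1 f) (x : E) (k : ℝ) : graphMeasure f (bregmanBall f x k) ≠ ⊤ := by
  have : IsLocallyFiniteMeasure (graphMeasure f) :=
    IsLocallyFiniteMeasure.withDensity_ofReal (continuous_areaDensity hf)
  exact (isBounded_bregmanBall hconv (hf.differentiable one_ne_zero) x k).measure_lt_top.ne

lemma integrable_exp_mul_bregman (hconv : StrictConvexOn ℝ Set.univ f) (hf : Differentiable ℝ f)
    {t : ℝ} (ht : t < 0) (x : E) : Integrable (fun y => Real.exp (t * bregman f x y)) := by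
  obtain ⟨m, hm, hle⟩ := exists_pos_mul_norm_sub_le_bregman hconv hf x
  have hcont := continuous_bregman hf.continuous x
  refine (((integrable_exp_neg_mul_norm (mul_pos (neg_pos.2 ht) hm)).comp_sub_right x).const_mul
    (Real.exp (-t * m))).mono' (by fun_prop) (Eventually.of_forall fun y => ?_)
  rw [Real.norm_eq_abs, Real.abs_exp, ← Real.exp_add]
  exact Real.exp_le_exp.2 (by nlinarith [hle y])

lemma integrable_exp_mul_bregman_mul_inner (hconv : StrictConvexOn ℝ Set.univ f)
    (hf : Differentiable ℝ f) {t : ℝ} (ht : t < 0) (x : E) :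
    Integrable fun y => Real.exp (t * bregman f x y) * ⟪gradient f y - gradient f x, y - x⟫ := by
  have hfderiv (y : E) : HasFDerivAt (fun y => Real.exp (t * bregman f x y))
      (Real.exp (t * bregman f x y) • t • innerSL ℝ (gradient f y - gradient f x)) y :=
    ((hasFDerivAt_bregman (hf y) x).const_mul t).exp
  have hradial := integrable_fderiv_apply_sub (fun y => (hfderiv y).differentiableAt)
    (integrable_exp_mul_bregman hconv hf ht x) x fun y s hs => Real.exp_le_exp.2
      (mul_le_mul_of_nonpos_left (bregman_le_bregman_dilation hconv.convexOn hf x y hs) ht.le)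
  refine (hradial.const_mul t⁻¹).congr (Eventually.of_forall fun y => ?_)
  simp only [(hfderiv y).fderiv, _root_.smul_apply, innerSL_apply_apply, smul_eq_mul]
  rw [mul_left_comm, inv_mul_cancel_left₀ ht.ne]

lemma integrable_exp_mul_bregman_graphMeasure (hconv : StrictConvexOn ℝ Set.univ f)
    (hf : ContDiff ℝ 1 f) {t : ℝ} (ht : t < 0) (x : E) :
    Integrable (fun y => Real.exp (t * bregman f x y)) (graphMeasure f) := by
  have hdiff := hf.differentiable one_ne_zero
  have hint := integrable_exp_mul_bregman hconv hdiff ht x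
  have hradial := integrable_exp_mul_bregman_mul_inner hconv hdiff ht x
  obtain ⟨C, hC⟩ := exists_norm_gradient_sub_le hconv.convexOn hdiff x
  rw [integrable_graphMeasure_iff hf]
  have hW := continuous_areaDensity hf
  have hD := continuous_bregman hf.continuous x
  refine ((hint.const_mul (1 + ‖gradient f x‖ + C)).add hradial).mono'
    (Continuous.aestronglyMeasurable (by fun_prop)) (Eventually.of_forall fun y => ?_)
  have hbound : areaDensity f y ≤
      1 + ‖gradient f x‖ + C + ⟪gradient f y - gradient f x, y - x⟫ := by
    linarith [areaDensity_le_one_add_norm_gradient (f := f) y, hC y,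
      norm_le_norm_add_norm_sub' (gradient f y) (gradient f x)]
  calc ‖areaDensity f y * Real.exp (t * bregman f x y)‖
      = areaDensity f y * Real.exp (t * bregman f x y) :=
        Real.norm_of_nonneg (mul_pos (areaDensity_pos y) (Real.exp_pos _)).le
    _ ≤ (1 + ‖gradient f x‖ + C + ⟪gradient f y - gradient f x, y - x⟫) *
          Real.exp (t * bregman f x y) := mul_le_mul_of_nonneg_right hbound (Real.exp_pos _).le
    _ = (1 + ‖gradient f x‖ + C) * Real.exp (t * bregman f x y) +
          Real.exp (t * bregman f x y) * ⟪gradient f y - gradient f x, y - x⟫ := by ring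

lemma mgf_bregman_pos (hconv : StrictConvexOn ℝ Set.univ f) (hf : ContDiff ℝ 1 f)
    {t : ℝ} (ht : t < 0) (x : E) : 0 < mgf (bregman f x) (graphMeasure f) t :=
  mgf_pos' (graphMeasure_ne_zero f) (integrable_exp_mul_bregman_graphMeasure hconv hf ht x)

lemma exists_sq_mgf_bregman_le (hconv : StrictConvexOn ℝ Set.univ f) (hf : ContDiff ℝ 1 f)
    {a b z : E} (hz : gradient f z = midpoint ℝ (gradient f a) (gradient f b)) :
    ∃ c, ∀ t < 0, mgf (bregman f z) (graphMeasure f) t ^ 2 ≤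
      mgf (bregman f a) (graphMeasure f) t * mgf (bregman f b) (graphMeasure f) t *
        Real.exp (t * c) := by
  refine ⟨2 * (bregman f z 0 - (bregman f a 0 + bregman f b 0) / 2), fun t ht => ?_⟩
  rw [funext (bregman_eq_of_gradient_eq_midpoint hz), mgf_add_const, mul_pow, ← Real.exp_nat_mul]
  have hint := integrable_exp_mul_bregman_graphMeasure hconv hf ht
  refine (mul_le_mul_of_nonneg_right (sq_mgf_half_add_le (hint a) (hint b))
    (Real.exp_pos _).le).trans_eq ?_
  push_cast
  ring_nf

end GraphMeasure

/-- The normalized surface area `S*_x(k) / W(x)` of the caps of the graph of `f` is the function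
`η` of the height `k` alone. -/
def HasNormalizedArea {E : Type*} [NormedAddCommGroup E] [InnerProductSpace ℝ E]
    [FiniteDimensional ℝ E] [MeasurableSpace E] [BorelSpace E] (f : E → ℝ) (η : ℝ → ℝ) : Prop :=
  ∀ x k, 0 < k → (graphMeasure f).real (bregmanBall f x k) / areaDensity f x = η k

section NormalizedArea

open ProbabilityTheory

variable {E : Type*} [NormedAddCommGroup E] [InnerProductSpace ℝ E] [FiniteDimensional ℝ E]
  [MeasurableSpace E] [BorelSpace E] {f : E → ℝ} {η : ℝ → ℝ}

lemma HasNormalizedArea.graphMeasure_bregmanBall (hη : HasNormalizedArea f η)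
    (hconv : StrictConvexOn ℝ Set.univ f) (hf : ContDiff ℝ 1 f) (x : E) {k : ℝ} (hk : 0 < k) :
    graphMeasure f (bregmanBall f x k) = ENNReal.ofReal (areaDensity f x * η k) := by
  rw [← hη x k hk, mul_div_cancel₀ _ (areaDensity_pos x).ne', ofReal_measureReal
    (graphMeasure_bregmanBall_ne_top hconv hf x k)]

lemma HasNormalizedArea.smul_map_bregman (hη : HasNormalizedArea f η)
    (hconv : StrictConvexOn ℝ Set.univ f) (hf : ContDiff ℝ 1 f) (x x' : E) :
    ENNReal.ofReal (areaDensity f x') • (graphMeasure f).map (bregman f x) =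
      ENNReal.ofReal (areaDensity f x) • (graphMeasure f).map (bregman f x') := by
  have hIio (x : E) (k : ℝ) :
      (graphMeasure f).map (bregman f x) (Set.Iio k) = graphMeasure f (bregmanBall f x k) :=
    Measure.map_apply (continuous_bregman hf.continuous x).measurable measurableSet_Iio
  refine measure_ext_of_Iio (fun k => ?_) fun k => ?_ <;>
    simp only [Measure.smul_apply, hIio, smul_eq_mul]
  · exact ENNReal.mul_ne_top ENNReal.ofReal_ne_top
      (graphMeasure_bregmanBall_ne_top hconv hf x k)
  · rcases le_or_gt k 0 with hk | hk
    · simp only [bregmanBall_eq_empty hconv.convexOn (hf.differentiable one_ne_zero) _ hk,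
        measure_empty, mul_zero]
    · rw [hη.graphMeasure_bregmanBall hconv hf x hk, hη.graphMeasure_bregmanBall hconv hf x' hk,
        ← ENNReal.ofReal_mul (areaDensity_pos _).le, ← ENNReal.ofReal_mul (areaDensity_pos _).le,
        mul_left_comm]

lemma HasNormalizedArea.mul_mgf_bregman (hη : HasNormalizedArea f η)
    (hconv : StrictConvexOn ℝ Set.univ f) (hf : ContDiff ℝ 1 f) (x x' : E) (t : ℝ) :
    areaDensity f x' * mgf (bregman f x) (graphMeasure f) t =
      areaDensity f x * mgf (bregman f x') (graphMeasure f) t := by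
  have hmgf := congrArg (mgf id · t) (hη.smul_map_bregman hconv hf x x')
  simpa only [mgf_smul_measure, ENNReal.toReal_ofReal (areaDensity_pos _).le,
    mgf_id_map (continuous_bregman hf.continuous _).aemeasurable] using hmgf

lemma HasNormalizedArea.sq_areaDensity_le (hη : HasNormalizedArea f η)
    (hconv : StrictConvexOn ℝ Set.univ f) (hf : ContDiff ℝ 1 f) {a b z : E}
    (hz : gradient f z = midpoint ℝ (gradient f a) (gradient f b)) :
    areaDensity f z ^ 2 ≤ areaDensity f a * areaDensity f b := by
  obtain ⟨c, hc⟩ := exists_sq_mgf_bregman_le hconv hf hz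
  have hexp (t : ℝ) (ht : t < 0) :
      areaDensity f z ^ 2 ≤ areaDensity f a * areaDensity f b * Real.exp (t * c) := by
    have hpos := mgf_bregman_pos hconv hf ht z
    have ha := hη.mul_mgf_bregman hconv hf a z t
    have hb := hη.mul_mgf_bregman hconv hf b z t
    refine le_of_mul_le_mul_right ?_ (pow_pos hpos 2)
    calc areaDensity f z ^ 2 * mgf (bregman f z) (graphMeasure f) t ^ 2
        ≤ areaDensity f z ^ 2 * (mgf (bregman f a) (graphMeasure f) t *
            mgf (bregman f b) (graphMeasure f) t * Real.exp (t * c)) :=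
          mul_le_mul_of_nonneg_left (hc t ht) (sq_nonneg _)
      _ = (areaDensity f z * mgf (bregman f a) (graphMeasure f) t) *
            (areaDensity f z * mgf (bregman f b) (graphMeasure f) t) * Real.exp (t * c) := by
          ring
      _ = areaDensity f a * areaDensity f b * Real.exp (t * c) *
            mgf (bregman f z) (graphMeasure f) t ^ 2 := by
          rw [ha, hb]
          ring
  have hlim : Tendsto (fun t => areaDensity f a * areaDensity f b * Real.exp (t * c)) (𝓝[<] 0)
      (𝓝 (areaDensity f a * areaDensity f b)) :=
    tendsto_nhdsWithin_of_tendsto_nhds (Continuous.tendsto' (by fun_prop) _ _ (by simp))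
  exact ge_of_tendsto hlim (eventually_nhdsWithin_of_forall hexp)

lemma HasNormalizedArea.areaDensity_le (hη : HasNormalizedArea f η)
    (hconv : StrictConvexOn ℝ Set.univ f) (hf : ContDiff ℝ 1 f) (a b : E) :
    areaDensity f b ≤ 8 * areaDensity f a := by
  obtain ⟨z, hz⟩ := (convex_range_gradient hconv (hf.differentiable one_ne_zero)).midpoint_mem
    ⟨a, rfl⟩ ⟨b, rfl⟩
  have ha := one_le_areaDensity (f := f) a
  have hb := areaDensity_le_of_gradient_eq_midpoint hz
  have hz_le : areaDensity f z ≤ 3 * areaDensity f a := by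
    nlinarith [hη.sq_areaDensity_le hconv hf hz, areaDensity_pos (f := f) z]
  linarith

end NormalizedArea

lemma exists_forall_inner_sub_le {E ι : Type*} [NormedAddCommGroup E] [InnerProductSpace ℝ E]
    [Nonempty ι] {g : ι → E} {M : ℝ} (hM : ∀ i, ‖g i‖ ≤ M) (e : E) {δ : ℝ} (hδ : 0 < δ) :
    ∃ i, ∀ j, ⟪g j - g i, e⟫ ≤ δ := by
  have hbdd : BddAbove (Set.range fun i => ⟪g i, e⟫) := ⟨M * ‖e‖, Set.forall_mem_range.2 fun i =>
    (real_inner_le_norm _ _).trans (mul_le_mul_of_nonneg_right (hM i) (norm_nonneg e))⟩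
  obtain ⟨i, hi⟩ := exists_lt_of_lt_ciSup (sub_lt_self (⨆ i, ⟪g i, e⟫) hδ)
  refine ⟨i, fun j => ?_⟩
  rw [inner_sub_left]
  linarith [le_ciSup hbdd j]

section BoundedGradient

variable {E : Type*} [NormedAddCommGroup E] [InnerProductSpace ℝ E] [FiniteDimensional ℝ E]
  [MeasurableSpace E] [BorelSpace E] {f : E → ℝ}

-- At a point where the slope in the direction `e` is almost maximal, the divergence grows slowly
-- along `e`, so the unit ball contains many disjoint balls centred on that ray.
lemma exists_lt_volume_bregmanBall [Nontrivial E] (hconv : ConvexOn ℝ Set.univ f)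
    (hf : Differentiable ℝ f) {M : ℝ} (hM : ∀ x, ‖gradient f x‖ ≤ M) {V : ENNReal}
    (hV : V ≠ ⊤) : ∃ x, V < volume (bregmanBall f x 1) := by
  obtain ⟨e, he⟩ := exists_norm_eq E zero_le_one
  obtain ⟨r, hr, hMr⟩ := exists_pos_mul_lt one_half_pos (2 * M)
  obtain ⟨N, hN⟩ := ENNReal.exists_nat_mul_gt (Metric.measure_ball_pos volume (0 : E) hr).ne' hV
  obtain ⟨δ, hδ, hNδ⟩ := exists_pos_mul_lt one_half_pos (2 * r * N)
  obtain ⟨x, hx⟩ := exists_forall_inner_sub_le hM e hδ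
  set p : ℕ → E := fun i => x + (2 * r * i) • e with hp
  have hcentre (i : ℕ) (hi : i < N) : bregman f x (p i) < 1 / 2 :=
    calc bregman f x (p i)
        ≤ ⟪gradient f (p i) - gradient f x, p i - x⟫ := bregman_le_inner hconv (hf _) x
      _ = 2 * r * i * ⟪gradient f (p i) - gradient f x, e⟫ := by
          simp only [hp, add_sub_cancel_left, inner_smul_right]
      _ ≤ 2 * r * i * δ := by gcongr; exact hx _
      _ ≤ 2 * r * N * δ := by gcongr
      _ < 1 / 2 := hNδ
  have hsub (i : ℕ) (hi : i ∈ Finset.range N) : Metric.ball (p i) r ⊆ bregmanBall f x 1 := by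
    intro z hz
    have hM0 : 0 ≤ 2 * M := mul_nonneg zero_le_two ((norm_nonneg _).trans (hM x))
    have hz_le := mul_le_mul_of_nonneg_left (mem_ball_iff_norm.1 hz).le hM0
    change bregman f x z < 1
    linarith [bregman_le_add_mul_norm_sub hconv hf hM x (p i) z,
      hcentre i (Finset.mem_range.1 hi)]
  have hsep : (Finset.range N : Set ℕ).Pairwise fun i j => 2 * r ≤ dist (p i) (p j) := by
    intro i _ j _ hij
    calc 2 * r ≤ 2 * r * dist i j := le_mul_of_one_le_right (by positivity)
          (Nat.pairwise_one_le_dist hij)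
      _ = dist (p i) (p j) := by
        rw [hp, dist_add_left, dist_eq_norm, ← sub_smul, norm_smul, he, mul_one, ← mul_sub,
          norm_mul, Real.norm_of_nonneg (by positivity), Nat.dist_eq, Real.norm_eq_abs]
  refine ⟨x, hN.trans_le ?_⟩
  simpa using card_mul_measure_ball_le hsep hsub

end BoundedGradient

theorem not_hasNormalizedArea {E : Type*} [NormedAddCommGroup E] [InnerProductSpace ℝ E]
    [FiniteDimensional ℝ E] [Nontrivial E] [MeasurableSpace E] [BorelSpace E] {f : E → ℝ}
    (hf : ContDiff ℝ 1 f) (hconv : StrictConvexOn ℝ Set.univ f) (η : ℝ → ℝ) :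
    ¬ HasNormalizedArea f η := by
  intro hη
  have hW := hη.areaDensity_le hconv hf 0
  obtain ⟨x, hx⟩ := exists_lt_volume_bregmanBall hconv.convexOn (hf.differentiable one_ne_zero)
    (fun y => (norm_gradient_le_areaDensity y).trans (hW y))
    (ENNReal.ofReal_ne_top (r := 8 * areaDensity f 0 * |η 1|))
  refine hx.not_ge ?_
  calc volume (bregmanBall f x 1)
      ≤ graphMeasure f (bregmanBall f x 1) := volume_le_graphMeasure f _
    _ = ENNReal.ofReal (areaDensity f x * η 1) := hη.graphMeasure_bregmanBall hconv hf x one_pos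
    _ ≤ ENNReal.ofReal (8 * areaDensity f 0 * |η 1|) := by
        refine ENNReal.ofReal_le_ofReal ((le_abs_self _).trans ?_)
        rw [abs_mul, abs_of_pos (areaDensity_pos x)]
        exact mul_le_mul_of_nonneg_right (hW x) (abs_nonneg _)

lemma strictConvexOn_univ_of_fderiv_fderiv_pos {E : Type*} [NormedAddCommGroup E]
    [NormedSpace ℝ E] {f : E → ℝ} (hf : ContDiff ℝ 2 f)
    (hpos : ∀ x v, v ≠ 0 → 0 < fderiv ℝ (fderiv ℝ f) x v v) : StrictConvexOn ℝ Set.univ f := by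
  refine ⟨convex_univ, fun x _ y _ hxy a b ha hb hab => ?_⟩
  set ℓ : ℝ →ᵃ[ℝ] E := AffineMap.lineMap x y with hℓ
  have hline (s : ℝ) : HasDerivAt ℓ (y - x) s := AffineMap.hasDerivAt_lineMap
  have hderiv (s : ℝ) : HasDerivAt (f ∘ ℓ) (fderiv ℝ f (ℓ s) (y - x)) s :=
    (hf.differentiable two_ne_zero _).hasFDerivAt.comp_hasDerivAt s (hline s)
  have hderiv2 (s : ℝ) : HasDerivAt (fun s => fderiv ℝ f (ℓ s) (y - x))
      (fderiv ℝ (fderiv ℝ f) (ℓ s) (y - x) (y - x)) s := by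
    have hf' : Differentiable ℝ (fderiv ℝ f) :=
      (hf.fderiv_right one_add_one_eq_two.le).differentiable one_ne_zero
    exact (ContinuousLinearMap.apply ℝ ℝ (y - x)).hasFDerivAt.comp_hasDerivAt s
      ((hf' _).hasFDerivAt.comp_hasDerivAt s (hline s))
  have hmono : StrictMono (deriv (f ∘ ℓ)) := by
    rw [funext fun s => (hderiv s).deriv]
    exact strictMono_of_hasDerivAt_pos hderiv2 fun s => hpos _ _ (sub_ne_zero.2 hxy.symm)
  have hlt := (hmono.strictConvexOn_univ_of_deriv
    (continuous_iff_continuousAt.2 fun s => (hderiv s).continuousAt)).2 (Set.mem_univ 0)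
      (Set.mem_univ 1) zero_ne_one ha hb hab
  simpa [hℓ, AffineMap.lineMap_apply_module, sub_eq_of_eq_add hab.symm] using hlt

lemma dotProduct_hessianMatrix_mulVec {n : ℕ} {f : EuclideanSpace ℝ (Fin n) → ℝ}
    (x v w : EuclideanSpace ℝ (Fin n)) :
    v.ofLp ⬝ᵥ (hessianMatrix f x).mulVec w.ofLp = fderiv ℝ (fderiv ℝ f) x v w := by
  have hsum (u : EuclideanSpace ℝ (Fin n)) : u = ∑ i, u i • EuclideanSpace.single i (1 : ℝ) := by
    simpa using ((EuclideanSpace.basisFun (Fin n) ℝ).sum_repr u).symm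
  conv_rhs => rw [hsum v, hsum w]
  simp only [map_sum, map_smul, _root_.sum_apply, _root_.smul_apply, smul_eq_mul,
    dotProduct, Matrix.mulVec, hessianMatrix, Matrix.of_apply, iteratedFDeriv_two_apply,
    Matrix.cons_val_zero, Matrix.cons_val_one, Finset.mul_sum]
  rw [Finset.sum_comm]
  exact Finset.sum_congr rfl fun _ _ => Finset.sum_congr rfl fun _ _ => by ring

lemma strictConvexOn_univ_of_posDef_hessianMatrix {n : ℕ} {f : EuclideanSpace ℝ (Fin n) → ℝ}
    (hf : ContDiff ℝ 2 f) (hhess : ∀ x, (hessianMatrix f x).PosDef) :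
    StrictConvexOn ℝ Set.univ f := by
  refine strictConvexOn_univ_of_fderiv_fderiv_pos hf fun x v hv => ?_
  rw [← dotProduct_hessianMatrix_mulVec]
  simpa using (hhess x).dotProduct_mulVec_pos (x := v.ofLp) (by simpa using hv)

theorem no_constant_normalized_surface_area_general {E : Type*} [NormedAddCommGroup E]
    [InnerProductSpace ℝ E] [FiniteDimensional ℝ E] [Nontrivial E] [MeasurableSpace E]
    [BorelSpace E] {f : E → ℝ} (hf : ContDiff ℝ 1 f) (hconv : StrictConvexOn ℝ Set.univ f) :
    ¬ ∃ η : ℝ → ℝ, ∀ (x : E) (k : ℝ), 0 < k →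
      (∫ y in {y | f y < f x + ⟪gradient f x, y - x⟫ + k}, √(1 + ‖gradient f y‖ ^ 2)) /
        √(1 + ‖gradient f x‖ ^ 2) = η k := by
  rintro ⟨η, hη⟩
  refine not_hasNormalizedArea hf hconv η fun x k hk => ?_
  have hball : bregmanBall f x k = {y | f y < f x + ⟪gradient f x, y - x⟫ + k} := by
    ext y
    simp only [bregmanBall, bregman, Set.mem_ofPred_eq, sub_sub, sub_lt_iff_lt_add']
  rw [measureReal_graphMeasure hf, hball]
  exact hη x k hk

theorem no_constant_normalized_surface_area (n : ℕ) (hn : 1 ≤ n)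
    (f : EuclideanSpace ℝ (Fin n) → ℝ)
    (hf : ContDiff ℝ (⊤ : ℕ∞) f) (hconv : ConvexOn ℝ Set.univ f)
    (hhess : ∀ x, (hessianMatrix f x).PosDef) :
    ¬ ∃ η : ℝ → ℝ, (∀ k, 0 < k → 0 ≤ η k) ∧
      ∀ (x : EuclideanSpace ℝ (Fin n)) (k : ℝ), 0 < k →
        (∫ y in {y | f y < f x + ⟪gradient f x, y - x⟫ + k},
            Real.sqrt (1 + ‖gradient f y‖ ^ 2)) /
          Real.sqrt (1 + ‖gradient f x‖ ^ 2) = η k := by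
  have : NeZero n := NeZero.of_pos hn
  exact fun ⟨η, _, hη⟩ => no_constant_normalized_surface_area_general (contDiff_infty.1 hf 1)
    (strictConvexOn_univ_of_posDef_hessianMatrix (contDiff_infty.1 hf 2) hhess) ⟨η, hη⟩
end

section
/- Let n ≥ 1 and let f : ℝⁿ → ℝ be a smooth convex function whose Hessian D²f(x) is positive definite at every x ∈ ℝⁿ. Suppose there exists a nonnegative function φ : (0,∞) → ℝ such that V*_x(k) = φ(k) for all x ∈ ℝⁿ and all k > 0, where V*_x(k) = ∫_{{y : f(y) < f(x) + ⟨∇f(x), y − x⟩ + k}} (f(x) + ⟨∇f(x), y − x⟩ + k − f(y)) dy. Then det D²f(x) is a positive constant, independent of x ∈ ℝⁿ. -/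
open MeasureTheory Filter
open scoped RealInnerProductSpace Topology

/-!
Over `x`, the cap of height `k` cut off from the graph of `f` is, after the parabolic rescaling
`y = x + √k z`, a cap of height `1` whose lower boundary converges to the osculating paraboloid
`z ↦ D²f(x)(z, z) / 2` as `k → 0`. The coercivity of `D²f(x)`, propagated by convexity, confines
the rescaled caps to a fixed ball, so dominated convergence gives
`V*_x(k) / k ^ (n / 2 + 1) → C / √(det D²f(x))`, where `C > 0` is the volume of the cap of the
standard paraboloid. If `V*_x(k)` does not depend on `x`, neither does the limit.
-/

open Matrix Asymptotics Module

section Taylor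

variable {E F : Type*} [NormedAddCommGroup E] [NormedSpace ℝ E]
  [NormedAddCommGroup F] [NormedSpace ℝ F]

theorem hasDerivAt_second_order_taylor_remainder_along {f : E → F} {x v : E} {s : ℝ}
    (hf : DifferentiableAt ℝ f (x + s • v)) (L : E →L[ℝ] F) (B : E →L[ℝ] E →L[ℝ] F) :
    HasDerivAt (fun s : ℝ => f (x + s • v) - s • L v - (s ^ 2 / 2) • B v v)
      ((fderiv ℝ f (x + s • v) - L - B (s • v)) v) s := by
  have hline : HasDerivAt (fun s : ℝ => x + s • v) v s := by
    simpa using ((hasDerivAt_id s).smul_const v).const_add x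
  have hlin : HasDerivAt (fun s : ℝ => s • L v) (L v) s := by
    simpa using (hasDerivAt_id s).smul_const (L v)
  have hquad : HasDerivAt (fun s : ℝ => (s ^ 2 / 2) • B v v) (s • B v v) s := by
    simpa using (((hasDerivAt_id s).pow 2).div_const 2).smul_const (B v v)
  simpa using! ((hf.hasFDerivAt.comp_hasDerivAt s hline).sub hlin).sub hquad

theorem second_order_taylor_isLittleO {f : E → F} {x : E}
    (hf : ∀ᶠ y in 𝓝 x, DifferentiableAt ℝ f y) (hf' : DifferentiableAt ℝ (fderiv ℝ f) x) :
    (fun v => f (x + v) - f x - fderiv ℝ f x v - (1 / 2 : ℝ) • fderiv ℝ (fderiv ℝ f) x v v)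
      =o[𝓝 0] fun v => ‖v‖ ^ 2 := by
  set B := fderiv ℝ (fderiv ℝ f) x
  refine isLittleO_iff.2 fun ε hε => ?_
  have hnear : ∀ᶠ u in 𝓝 (0 : E), DifferentiableAt ℝ f (x + u) :=
    ((continuous_const_add x).tendsto' 0 x (add_zero x)).eventually hf
  have hlin : ∀ᶠ u in 𝓝 (0 : E), ‖fderiv ℝ f (x + u) - fderiv ℝ f x - B u‖ ≤ ε * ‖u‖ :=
    isLittleO_iff.1 (hasFDerivAt_iff_isLittleO_nhds_zero.1 hf'.hasFDerivAt) hε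
  obtain ⟨δ, hδ, hball⟩ := Metric.eventually_nhds_iff_ball.1 (hnear.and hlin)
  filter_upwards [Metric.ball_mem_nhds (0 : E) hδ] with v hv
  have hnorm : ∀ s ∈ Set.Icc (0 : ℝ) 1, ‖s • v‖ ≤ ‖v‖ := fun s hs => by
    rw [norm_smul, Real.norm_of_nonneg hs.1]
    exact mul_le_of_le_one_left (norm_nonneg v) hs.2
  have hsegment : ∀ s ∈ Set.Icc (0 : ℝ) 1, s • v ∈ Metric.ball (0 : E) δ := fun s hs =>
    mem_ball_zero_iff.2 ((hnorm s hs).trans_lt (mem_ball_zero_iff.1 hv))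
  have hbound : ∀ s ∈ Set.Ico (0 : ℝ) 1,
      ‖(fderiv ℝ f (x + s • v) - fderiv ℝ f x - B (s • v)) v‖ ≤ ε * ‖v‖ ^ 2 := fun s hs => by
    have hs' := Set.Ico_subset_Icc_self hs
    calc ‖(fderiv ℝ f (x + s • v) - fderiv ℝ f x - B (s • v)) v‖
        ≤ ‖fderiv ℝ f (x + s • v) - fderiv ℝ f x - B (s • v)‖ * ‖v‖ :=
          ContinuousLinearMap.le_opNorm _ v
      _ ≤ ε * ‖v‖ * ‖v‖ := by
          gcongr
          exact (hball _ (hsegment s hs')).2.trans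
            (mul_le_mul_of_nonneg_left (hnorm s hs') hε.le)
      _ = ε * ‖v‖ ^ 2 := by ring
  have hmvt := norm_image_sub_le_of_norm_deriv_le_segment_01'
    (fun s hs => (hasDerivAt_second_order_taylor_remainder_along
      (hball _ (hsegment s hs)).1 (fderiv ℝ f x) B).hasDerivWithinAt) hbound
  rw [Real.norm_of_nonneg (sq_nonneg _)]
  refine le_trans (le_of_eq (congrArg norm ?_)) hmvt
  simp only [one_smul, one_pow, zero_smul, add_zero, sub_zero, ne_eq, OfNat.ofNat_ne_zero,
    not_false_eq_true, zero_pow, zero_div]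
  abel

end Taylor

section Cap

variable {E : Type*} [NormedAddCommGroup E] [NormedSpace ℝ E]

/-- The height `f (x + v) - f x - Df(x) v` of the graph of `f` above its tangent hyperplane at `x`,
as a function of the displacement `v` from `x`. -/
noncomputable def tangentGap (f : E → ℝ) (x v : E) : ℝ :=
  f (x + v) - f x - fderiv ℝ f x v

/-- The volume `V*_x(k)` of the cap between the graph of `f` and the hyperplane parallel to the
tangent hyperplane at `x` and lying `k` above it. The derivative replaces the gradient of the
paper, so that no inner product is needed. Being a Bochner integral, it is `0` on a cap of infinite
volume. -/
noncomputable def capVolume [MeasurableSpace E] (μ : Measure E) (f : E → ℝ) (x : E) (k : ℝ) : ℝ :=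
  ∫ y in {y | f y < f x + fderiv ℝ f x (y - x) + k}, (f x + fderiv ℝ f x (y - x) + k - f y) ∂μ

theorem tangentGap_zero (f : E → ℝ) (x : E) : tangentGap f x 0 = 0 := by
  simp [tangentGap]

theorem convexOn_tangentGap {f : E → ℝ} (hf : ConvexOn ℝ Set.univ f) (x : E) :
    ConvexOn ℝ Set.univ (tangentGap f x) := by
  have hshift : ConvexOn ℝ Set.univ fun v => f (x + v) := by
    simpa using! hf.translate_right x
  exact (hshift.sub (concaveOn_const (f x) convex_univ)).sub
    ((fderiv ℝ f x).toLinearMap.concaveOn convex_univ)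

theorem capVolume_eq_integral_max [MeasurableSpace E] [BorelSpace E] (μ : Measure E)
    [μ.IsAddLeftInvariant] {f : E → ℝ} (hf : Measurable f) (x : E) (k : ℝ) :
    capVolume μ f x k = ∫ v, max (k - tangentGap f x v) 0 ∂μ := by
  have hindicator : capVolume μ f x k =
      ∫ y, max (f x + fderiv ℝ f x (y - x) + k - f y) 0 ∂μ := by
    rw [capVolume, ← integral_indicator (measurableSet_lt hf (by fun_prop))]
    refine integral_congr_ae (Eventually.of_forall fun y => ?_)
    simp only [Set.indicator_apply, Set.mem_ofPred_eq]
    split_ifs with hy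
    · exact (max_eq_left (sub_pos.2 hy).le).symm
    · exact (max_eq_right (sub_nonpos.2 (not_lt.1 hy))).symm
  rw [hindicator, ← integral_add_left_eq_self (μ := μ) _ x]
  refine integral_congr_ae (Eventually.of_forall fun v => ?_)
  simp only [tangentGap, add_sub_cancel_left]
  congr 1
  ring

variable [FiniteDimensional ℝ E] [MeasurableSpace E] [BorelSpace E]

theorem capVolume_eq_sqrt_pow_mul (μ : Measure E) [μ.IsAddHaarMeasure] {f : E → ℝ}
    (hf : Measurable f) (x : E) {k : ℝ} (hk : 0 < k) :
    capVolume μ f x k =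
      √k ^ (finrank ℝ E + 2) * ∫ z, max (1 - tangentGap f x (√k • z) / k) 0 ∂μ := by
  have hscale : ∀ z, max (1 - tangentGap f x (√k • z) / k) 0 =
      k⁻¹ * max (k - tangentGap f x (√k • z)) 0 := fun z => by
    rw [mul_max_of_nonneg _ _ (inv_nonneg.2 hk.le), mul_zero, mul_sub, inv_mul_cancel₀ hk.ne',
      inv_mul_eq_div]
  have : √k ≠ 0 := (Real.sqrt_pos.2 hk).ne'
  simp_rw [hscale]
  rw [integral_const_mul, Measure.integral_comp_smul_of_nonneg μ
    (fun v => max (k - tangentGap f x v) 0) √k (hR := Real.sqrt_nonneg k), smul_eq_mul,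
    ← capVolume_eq_integral_max μ hf, pow_add, Real.sq_sqrt hk.le]
  field_simp

end Cap

section Coercive

variable {E : Type*} [NormedAddCommGroup E] [NormedSpace ℝ E]

theorem isCoercive_of_forall_pos [FiniteDimensional ℝ E] {B : E →L[ℝ] E →L[ℝ] ℝ}
    (hB : ∀ v, v ≠ 0 → 0 < B v v) : IsCoercive B := by
  obtain ⟨c, hc, hsphere⟩ := (isCompact_sphere (0 : E) 1).exists_forall_le'
    (f := fun v => B v v) (by fun_prop)
    fun v hv => hB v (ne_zero_of_mem_unit_sphere ⟨v, hv⟩)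
  refine ⟨c, hc, fun v => ?_⟩
  obtain rfl | hv := eq_or_ne v 0
  · simp
  have hunit := hsphere (‖v‖⁻¹ • v) (by simp [norm_smul, hv])
  simp only [map_smul, _root_.smul_apply, smul_eq_mul] at hunit
  have : 0 < ‖v‖ := norm_pos_iff.2 hv
  calc c * ‖v‖ * ‖v‖ ≤ ‖v‖⁻¹ * (‖v‖⁻¹ * B v v) * ‖v‖ * ‖v‖ := by gcongr
    _ = B v v := by field_simp

theorem exists_forall_norm_le_mul_norm_sq_le {g : E → ℝ} {B : E →L[ℝ] E →L[ℝ] ℝ} (hB : IsCoercive B)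
    (hg : (fun v => g v - B v v / 2) =o[𝓝 0] fun v => ‖v‖ ^ 2) :
    ∃ c > 0, ∃ δ > 0, ∀ v, ‖v‖ ≤ δ → c * ‖v‖ ^ 2 ≤ g v := by
  obtain ⟨c, hc, hcB⟩ := hB
  obtain ⟨δ, hδ, hball⟩ := Metric.nhds_basis_closedBall.eventually_iff.1
    (isLittleO_iff.1 hg (show 0 < c / 4 by positivity))
  refine ⟨c / 4, by positivity, δ, hδ, fun v hv => ?_⟩
  have hclose := hball (mem_closedBall_zero_iff.2 hv)
  rw [Real.norm_of_nonneg (sq_nonneg _), Real.norm_eq_abs] at hclose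
  linarith [(abs_le.1 hclose).1, hcB v]

theorem min_mul_norm_sq_le_of_convexOn {g : E → ℝ} (hg : ConvexOn ℝ Set.univ g) (h0 : g 0 = 0)
    {c δ : ℝ} (hc : 0 ≤ c) (hδ : 0 < δ) (hlocal : ∀ v, ‖v‖ ≤ δ → c * ‖v‖ ^ 2 ≤ g v) (v : E) :
    min (c * ‖v‖ ^ 2) (c * δ ^ 2) ≤ g v := by
  rcases le_or_gt ‖v‖ δ with hv | hv
  · exact (min_le_left _ _).trans (hlocal v hv)
  refine (min_le_right _ _).trans ?_
  have hv0 : 0 < ‖v‖ := hδ.trans hv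
  have hs0 : 0 ≤ δ / ‖v‖ := by positivity
  have hs1 : δ / ‖v‖ ≤ 1 := (div_le_one hv0).2 hv.le
  have hnorm : ‖(δ / ‖v‖) • v‖ = δ := by
    rw [norm_smul, Real.norm_of_nonneg hs0, div_mul_cancel₀ _ hv0.ne']
  have hsphere : c * δ ^ 2 ≤ g ((δ / ‖v‖) • v) := by
    simpa only [hnorm] using hlocal _ hnorm.le
  have hchord : g ((δ / ‖v‖) • v) ≤ δ / ‖v‖ * g v := by
    simpa [h0] using hg.2 (Set.mem_univ v) (Set.mem_univ 0) hs0 (sub_nonneg.2 hs1)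
      (add_sub_cancel _ _)
  have hpos : 0 ≤ g v := by
    have : 0 ≤ δ / ‖v‖ * g v := (by positivity : 0 ≤ c * δ ^ 2).trans (hsphere.trans hchord)
    exact nonneg_of_mul_nonneg_right this (by positivity)
  exact (hsphere.trans hchord).trans (mul_le_of_le_one_left hpos hs1)

theorem max_one_sub_comp_sqrt_smul_div_le_indicator {g : E → ℝ} {c m k : ℝ} (hc : 0 < c)
    (hk : 0 < k) (hkm : k ≤ m) (hg : ∀ v, min (c * ‖v‖ ^ 2) m ≤ g v) (z : E) :
    max (1 - g (√k • z) / k) 0 ≤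
      (Metric.closedBall (0 : E) (√c)⁻¹).indicator (fun _ => (1 : ℝ)) z := by
  have hsq : c * ‖√k • z‖ ^ 2 = k * (c * ‖z‖ ^ 2) := by
    rw [norm_smul, mul_pow, Real.norm_of_nonneg (Real.sqrt_nonneg k), Real.sq_sqrt hk.le]
    ring
  have hgz := hg (√k • z)
  rw [hsq] at hgz
  by_cases hz : z ∈ Metric.closedBall (0 : E) (√c)⁻¹
  · rw [Set.indicator_of_mem hz]
    have : 0 ≤ g (√k • z) := (le_min (by positivity) (hk.le.trans hkm)).trans hgz
    exact max_le (sub_le_self _ (by positivity)) zero_le_one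
  · rw [Set.indicator_of_notMem hz]
    rw [mem_closedBall_zero_iff, not_le, ← Real.sqrt_inv] at hz
    have hcz : 1 ≤ c * ‖z‖ ^ 2 :=
      (inv_le_iff_one_le_mul₀' hc).1 (Real.lt_sq_of_sqrt_lt hz).le
    have : k ≤ g (√k • z) := (le_min (le_mul_of_one_le_right hk.le hcz) hkm).trans hgz
    exact max_le (sub_nonpos.2 ((one_le_div hk).2 this)) le_rfl

theorem tendsto_comp_sqrt_smul_div {g : E → ℝ} {B : E →L[ℝ] E →L[ℝ] ℝ}
    (hg : (fun v => g v - B v v / 2) =o[𝓝 0] fun v => ‖v‖ ^ 2) (z : E) :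
    Tendsto (fun k : ℝ => g (√k • z) / k) (𝓝[>] 0) (𝓝 (B z z / 2)) := by
  have hz : Tendsto (fun k : ℝ => √k • z) (𝓝[>] 0) (𝓝 0) :=
    ((by fun_prop : Continuous fun k : ℝ => √k • z).tendsto' 0 0 (by simp)).mono_left
      nhdsWithin_le_nhds
  have hnorm : (fun k : ℝ => ‖√k • z‖ ^ 2) =O[𝓝[>] 0] fun k => k := by
    refine IsBigO.of_bound (‖z‖ ^ 2) ?_
    filter_upwards [self_mem_nhdsWithin] with k (hk : 0 < k)
    simp [norm_smul, mul_pow, Real.sq_sqrt hk.le, abs_of_pos hk, mul_comm]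
  have hlim := ((hg.comp_tendsto hz).trans_isBigO hnorm).tendsto_div_nhds_zero.add_const (B z z / 2)
  rw [zero_add] at hlim
  refine hlim.congr' ?_
  filter_upwards [self_mem_nhdsWithin] with k (hk : 0 < k)
  have hB : B (√k • z) (√k • z) = k * B z z := by
    simp only [map_smul, _root_.smul_apply, smul_eq_mul, ← mul_assoc, Real.mul_self_sqrt hk.le]
  simp only [Function.comp_apply, hB]
  field_simp
  ring

end Coercive

section Asymptotics

variable {E : Type*} [NormedAddCommGroup E] [NormedSpace ℝ E] [FiniteDimensional ℝ E]
  [MeasurableSpace E] [BorelSpace E]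

theorem tendsto_integral_max_one_sub_comp_sqrt_smul_div (μ : Measure E)
    [IsFiniteMeasureOnCompacts μ] {g : E → ℝ} (hg : ConvexOn ℝ Set.univ g) (h0 : g 0 = 0)
    {B : E →L[ℝ] E →L[ℝ] ℝ} (hB : IsCoercive B)
    (hgB : (fun v => g v - B v v / 2) =o[𝓝 0] fun v => ‖v‖ ^ 2) :
    Tendsto (fun k : ℝ => ∫ z, max (1 - g (√k • z) / k) 0 ∂μ) (𝓝[>] 0)
      (𝓝 (∫ z, max (1 - B z z / 2) 0 ∂μ)) := by
  have hcont : Continuous g := continuousOn_univ.1 (hg.continuousOn isOpen_univ)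
  obtain ⟨c, hc, δ, hδ, hlocal⟩ := exists_forall_norm_le_mul_norm_sq_le hB hgB
  have hgrowth := min_mul_norm_sq_le_of_convexOn hg h0 hc.le hδ hlocal
  refine tendsto_integral_filter_of_dominated_convergence
    ((Metric.closedBall (0 : E) (√c)⁻¹).indicator fun _ => (1 : ℝ)) ?_ ?_ ?_ ?_
  · exact Eventually.of_forall fun k => (by fun_prop : Continuous fun z =>
      max (1 - g (√k • z) / k) 0).aestronglyMeasurable
  · filter_upwards [Ioc_mem_nhdsGT (show 0 < c * δ ^ 2 by positivity)] with k hk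
    refine Eventually.of_forall fun z => ?_
    rw [Real.norm_of_nonneg (le_max_right _ _)]
    exact max_one_sub_comp_sqrt_smul_div_le_indicator hc hk.1 hk.2 hgrowth z
  · exact (integrable_indicator_iff Metric.isClosed_closedBall.measurableSet).2
      (integrableOn_const (isCompact_closedBall _ _).measure_lt_top.ne)
  · exact Eventually.of_forall fun z =>
      ((tendsto_comp_sqrt_smul_div hgB z).const_sub 1).max tendsto_const_nhds

theorem tendsto_capVolume_div_sqrt_pow (μ : Measure E) [μ.IsAddHaarMeasure] {f : E → ℝ} {x : E}
    (hconv : ConvexOn ℝ Set.univ f) (hf : ∀ᶠ y in 𝓝 x, DifferentiableAt ℝ f y)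
    (hf' : DifferentiableAt ℝ (fderiv ℝ f) x) (hB : IsCoercive (fderiv ℝ (fderiv ℝ f) x)) :
    Tendsto (fun k => capVolume μ f x k / √k ^ (finrank ℝ E + 2)) (𝓝[>] 0)
      (𝓝 (∫ z, max (1 - fderiv ℝ (fderiv ℝ f) x z z / 2) 0 ∂μ)) := by
  have hmeas : Measurable f := (continuousOn_univ.1 (hconv.continuousOn isOpen_univ)).measurable
  have htaylor : (fun v => tangentGap f x v - fderiv ℝ (fderiv ℝ f) x v v / 2)
      =o[𝓝 0] fun v => ‖v‖ ^ 2 :=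
    (second_order_taylor_isLittleO hf hf').congr_left fun v => by
      rw [tangentGap, smul_eq_mul, one_div_mul_eq_div]
  refine (tendsto_integral_max_one_sub_comp_sqrt_smul_div μ (convexOn_tangentGap hconv x)
    (tangentGap_zero f x) hB htaylor).congr' ?_
  filter_upwards [self_mem_nhdsWithin] with k (hk : 0 < k)
  have : 0 < √k := Real.sqrt_pos.2 hk
  rw [capVolume_eq_sqrt_pow_mul μ hmeas x hk, mul_div_cancel_left₀ _ (by positivity)]

theorem integral_max_one_sub_norm_sq_pos (μ : Measure E) [IsFiniteMeasureOnCompacts μ]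
    [μ.IsOpenPosMeasure] : 0 < ∫ z : E, max (1 - ‖z‖ ^ 2 / 2) 0 ∂μ := by
  refine Continuous.integral_pos_of_hasCompactSupport_nonneg_nonzero (x := 0) (by fun_prop)
    (HasCompactSupport.intro (isCompact_closedBall (0 : E) 2) fun z hz => max_eq_right ?_)
    (fun z => le_max_right _ _) (by simp)
  rw [mem_closedBall_zero_iff, not_le] at hz
  nlinarith

theorem integral_comp_continuousLinearMap {F : Type*} [NormedAddCommGroup F] [NormedSpace ℝ F]
    (μ : Measure E) [μ.IsAddHaarMeasure] {L : E →L[ℝ] E} (hL : L.det ≠ 0) (g : E → F) :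
    ∫ z, g (L z) ∂μ = |L.det|⁻¹ • ∫ z, g z ∂μ := by
  have hbij : Function.Bijective L := (LinearMap.equivOfDetNeZero (L : E →ₗ[ℝ] E) hL).bijective
  have himage := integral_image_eq_integral_abs_det_fderiv_smul μ MeasurableSet.univ
    (fun z _ => L.hasFDerivAt.hasFDerivWithinAt) hbij.injective.injOn g
  rw [Set.image_univ_of_surjective hbij.surjective, setIntegral_univ, setIntegral_univ,
    integral_smul] at himage
  rw [himage, inv_smul_smul₀ (abs_ne_zero.2 hL)]

end Asymptotics

section Hessian

open scoped MatrixOrder Matrix.Norms.L2Operator in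
theorem exists_norm_sq_eq_dotProduct_mulVec_of_posSemidef {ι : Type*} [Fintype ι] [DecidableEq ι]
    {H : Matrix ι ι ℝ} (hH : H.PosSemidef) :
    ∃ L : EuclideanSpace ℝ ι →L[ℝ] EuclideanSpace ℝ ι,
      L.det ^ 2 = H.det ∧ ∀ z, ‖L z‖ ^ 2 = z.ofLp ⬝ᵥ H *ᵥ z.ofLp := by
  obtain ⟨A, rfl⟩ := CStarAlgebra.nonneg_iff_eq_star_mul_self.1 hH.nonneg
  rw [star_eq_conjTranspose, conjTranspose_eq_transpose_of_trivial]
  refine ⟨toEuclideanCLM (𝕜 := ℝ) A, ?_, fun z => ?_⟩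
  · have hdet : (toEuclideanCLM (𝕜 := ℝ) A).det = A.det := LinearMap.det_toLpLin 2 A
    rw [hdet, det_mul, det_transpose, pow_two]
  · rw [EuclideanSpace.real_norm_sq_eq, ← mulVec_mulVec, dotProduct_mulVec, vecMul_transpose]
    simp [dotProduct, pow_two]

theorem integral_comp_dotProduct_mulVec {ι F : Type*} [Fintype ι] [DecidableEq ι]
    [NormedAddCommGroup F] [NormedSpace ℝ F] {H : Matrix ι ι ℝ} (hH : H.PosDef) (g : ℝ → F) :
    ∫ z : EuclideanSpace ℝ ι, g (z.ofLp ⬝ᵥ H *ᵥ z.ofLp) =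
      (√H.det)⁻¹ • ∫ z : EuclideanSpace ℝ ι, g (‖z‖ ^ 2) := by
  obtain ⟨L, hdet, hnorm⟩ := exists_norm_sq_eq_dotProduct_mulVec_of_posSemidef hH.posSemidef
  have hL : L.det ≠ 0 := by
    rw [← pow_ne_zero_iff two_ne_zero, hdet]
    exact hH.det_pos.ne'
  simp_rw [← hnorm]
  rw [← hdet, Real.sqrt_sq_eq_abs, integral_comp_continuousLinearMap volume hL fun z => g (‖z‖ ^ 2)]

theorem hessianMatrix_eq_toMatrix₂ {n : ℕ} (f : EuclideanSpace ℝ (Fin n) → ℝ)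
    (x : EuclideanSpace ℝ (Fin n)) :
    hessianMatrix f x =
      LinearMap.toMatrix₂ (EuclideanSpace.basisFun (Fin n) ℝ).toBasis
        (EuclideanSpace.basisFun (Fin n) ℝ).toBasis (fderiv ℝ (fderiv ℝ f) x).toLinearMap₁₂ := by
  ext i j
  simp [hessianMatrix, iteratedFDeriv_two_apply, LinearMap.toMatrix₂_apply]

variable {n : ℕ} {f : EuclideanSpace ℝ (Fin n) → ℝ} {x : EuclideanSpace ℝ (Fin n)}

theorem fderiv_fderiv_apply_eq_dotProduct_hessianMatrix_mulVec (v w : EuclideanSpace ℝ (Fin n)) :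
    fderiv ℝ (fderiv ℝ f) x v w = v.ofLp ⬝ᵥ hessianMatrix f x *ᵥ w.ofLp := by
  rw [hessianMatrix_eq_toMatrix₂]
  exact apply_eq_dotProduct_toMatrix₂_mulVec (EuclideanSpace.basisFun (Fin n) ℝ).toBasis
    (EuclideanSpace.basisFun (Fin n) ℝ).toBasis (fderiv ℝ (fderiv ℝ f) x).toLinearMap₁₂ v w

theorem isCoercive_fderiv_fderiv_of_posDef (hH : (hessianMatrix f x).PosDef) :
    IsCoercive (fderiv ℝ (fderiv ℝ f) x) := by
  refine isCoercive_of_forall_pos fun v hv => ?_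
  rw [fderiv_fderiv_apply_eq_dotProduct_hessianMatrix_mulVec]
  simpa using hH.dotProduct_mulVec_pos (x := v.ofLp) (by simpa using hv)

theorem tendsto_capVolume_div_sqrt_pow_of_posDef (hconv : ConvexOn ℝ Set.univ f)
    (hf : ∀ᶠ y in 𝓝 x, DifferentiableAt ℝ f y) (hf' : DifferentiableAt ℝ (fderiv ℝ f) x)
    (hH : (hessianMatrix f x).PosDef) :
    Tendsto (fun k => capVolume volume f x k / √k ^ (n + 2)) (𝓝[>] 0)
      (𝓝 ((√(hessianMatrix f x).det)⁻¹ *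
        ∫ z : EuclideanSpace ℝ (Fin n), max (1 - ‖z‖ ^ 2 / 2) 0)) := by
  have hlim := tendsto_capVolume_div_sqrt_pow volume hconv hf hf'
    (isCoercive_fderiv_fderiv_of_posDef hH)
  simp_rw [fderiv_fderiv_apply_eq_dotProduct_hessianMatrix_mulVec] at hlim
  rwa [integral_comp_dotProduct_mulVec hH fun q => max (1 - q / 2) 0, smul_eq_mul,
    finrank_euclideanSpace_fin] at hlim

theorem hessian_det_constant_of_constant_volume_general (hf : Differentiable ℝ f)
    (hf' : Differentiable ℝ (fderiv ℝ f)) (hconv : ConvexOn ℝ Set.univ f)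
    (hhess : ∀ x, (hessianMatrix f x).PosDef) {φ : ℝ → ℝ}
    (hV : ∀ x, ∀ᶠ k in 𝓝[>] 0, capVolume volume f x k = φ k) :
    ∃ c : ℝ, 0 < c ∧ ∀ x, (hessianMatrix f x).det = c := by
  have hlim : ∀ x, Tendsto (fun k => φ k / √k ^ (n + 2)) (𝓝[>] 0)
      (𝓝 ((√(hessianMatrix f x).det)⁻¹ *
        ∫ z : EuclideanSpace ℝ (Fin n), max (1 - ‖z‖ ^ 2 / 2) 0)) := fun x =>
    (tendsto_capVolume_div_sqrt_pow_of_posDef hconv (Eventually.of_forall hf) (hf' x)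
      (hhess x)).congr' ((hV x).mono fun k hk => by rw [hk])
  refine ⟨(hessianMatrix f 0).det, (hhess 0).det_pos, fun x => ?_⟩
  have hsqrt := inv_injective <| mul_right_cancel₀
    (integral_max_one_sub_norm_sq_pos volume).ne' (tendsto_nhds_unique (hlim x) (hlim 0))
  exact (Real.sqrt_inj (hhess x).det_pos.le (hhess 0).det_pos.le).1 hsqrt

end Hessian

theorem hessian_det_constant_of_constant_volume (n : ℕ) (hn : 1 ≤ n)
    (f : EuclideanSpace ℝ (Fin n) → ℝ)
    (hf : ContDiff ℝ (⊤ : ℕ∞) f) (hconv : ConvexOn ℝ Set.univ f)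
    (hhess : ∀ x, (hessianMatrix f x).PosDef)
    (φ : ℝ → ℝ) (hφ : ∀ k, 0 < k → 0 ≤ φ k)
    (hV : ∀ (x : EuclideanSpace ℝ (Fin n)) (k : ℝ), 0 < k →
      (∫ y in {y | f y < f x + ⟪gradient f x, y - x⟫ + k},
        (f x + ⟪gradient f x, y - x⟫ + k - f y)) = φ k) :
    ∃ c : ℝ, 0 < c ∧ ∀ x, (hessianMatrix f x).det = c :=
  hessian_det_constant_of_constant_volume_general (hf.differentiable (by simp))
    ((contDiff_infty_iff_fderiv.1 hf).2.differentiable (by simp)) hconv hhess fun x =>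
      eventually_nhdsWithin_of_forall fun k hk => by
        simpa only [capVolume, inner_gradient_left] using hV x k hk
end
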